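/- arXiv:1901.05396 — 2 statements merged into one kernel-verified Lean document; each statement's English description precedes it below -/
import Mathlib

section
/- Let (X,𝒰) be a uniform space such that for every uniformly continuous f : X → ℝ there is k ≥ 0 for which the set {x ∈ X : |f(x)| ≥ k} is uniformly isolated. Then a subset B ⊆ X is Bourbaki bounded in X if and only if for every entourage U ∈ 𝒰 the set B ∩ I_U is finite, where I_U = {x ∈ X : U[x] = {x}}. In particular, the set X' of limit points of X is Bourbaki bounded in X. -/
/-- `A` is uniformly isolated in a uniform space: there is an entourage `U`
with `U[x] = {x}` for all `x ∈ A`. -/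
def UnifIsolated {X : Type*} [UniformSpace X] (A : Set X) : Prop :=
  ∃ U ∈ uniformity X, ∀ x ∈ A, UniformSpace.ball x U = {x}

/-- `A` is Bourbaki bounded in `X`: every uniformly continuous real-valued
function on `X` is bounded on `A`. -/
def BourbakiBounded {X : Type*} [UniformSpace X] (A : Set X) : Prop :=
  ∀ f : X → ℝ, UniformContinuous f → ∃ M : ℝ, ∀ x ∈ A, |f x| ≤ M

/-!
A function which is uniformly continuous off a uniformly isolated set is uniformly continuous, so
on an infinite uniformly isolated set one can prescribe unbounded values: a uniformly isolated
Bourbaki bounded set is finite. Conversely, if `|f| ≥ k` only on a uniformly isolated set, then `f`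
is bounded on every `B` that meets that set in finitely many points.
-/

theorem exists_eqOn_compl_zero_not_bddAbove_image {α : Type*} {s : Set α} (hs : s.Infinite) :
    ∃ f : α → ℝ, Set.EqOn f 0 sᶜ ∧ ¬BddAbove (f '' s) := by
  let e : ℕ ↪ s := hs.natEmbedding
  have e_inj : Function.Injective fun n => (e n : α) :=
    Subtype.val_injective.comp e.injective
  refine ⟨Function.extend (fun n => (e n : α)) (fun n => (n : ℝ)) 0, fun x hx => ?_, ?_⟩
  · refine Function.extend_apply' _ _ _ ?_
    rintro ⟨n, rfl⟩
    exact hx (e n).2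
  · rintro ⟨M, hM⟩
    obtain ⟨n, hn⟩ := exists_nat_gt M
    exact hn.not_ge (hM ⟨e n, (e n).2, e_inj.extend_apply _ _ n⟩)

theorem exists_forall_le_of_finite_inter {α β : Type*} [LinearOrder β] {g : α → β} {k : β}
    {s : Set α} (hfin : (s ∩ {x | k ≤ g x}).Finite) : ∃ M, ∀ x ∈ s, g x ≤ M := by
  have : Nonempty β := ⟨k⟩
  obtain ⟨M, hM⟩ := (hfin.image g).bddAbove
  refine ⟨max k M, fun x hx => ?_⟩
  obtain hk | hk := le_total k (g x)
  · exact le_max_of_le_right (hM ⟨x, ⟨hx, hk⟩, rfl⟩)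
  · exact le_max_of_le_left hk

section

variable {X : Type*} [UniformSpace X] {A B : Set X} {U : Set (X × X)}

theorem unifIsolated_setOf_ball_eq_singleton (hU : U ∈ uniformity X) :
    UnifIsolated {x : X | UniformSpace.ball x U = {x}} :=
  ⟨U, hU, fun _ hx => hx⟩

theorem UnifIsolated.mono (hB : UnifIsolated B) (hAB : A ⊆ B) : UnifIsolated A :=
  let ⟨U, hU, hball⟩ := hB
  ⟨U, hU, fun x hx => hball x (hAB hx)⟩

theorem BourbakiBounded.mono (hB : BourbakiBounded B) (hAB : A ⊆ B) : BourbakiBounded A :=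
  fun f hf => (hB f hf).imp fun _ hM x hx => hM x (hAB hx)

theorem UnifIsolated.uniformContinuous_of_compl {Y : Type*} [UniformSpace Y]
    (hA : UnifIsolated A) {f : X → Y} (hf : UniformContinuousOn f Aᶜ) : UniformContinuous f := by
  obtain ⟨U, hU, hball⟩ := hA
  have eq_of_near : ∀ x ∈ A, ∀ y, (x, y) ∈ U → y = x := fun x hx y hxy =>
    (hball x hx).subset hxy
  refine fun W hW => Filter.mem_map.2 ?_
  have near_compl := Filter.mem_inf_principal.1 (hf hW)
  filter_upwards [hU, symm_le_uniformity hU, near_compl] with ⟨x, y⟩ hxy hyx hcompl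
  change (f x, f y) ∈ W
  by_cases hx : x ∈ A
  · exact mem_uniformity_of_eq hW (congrArg f (eq_of_near x hx y hxy).symm)
  by_cases hy : y ∈ A
  · exact mem_uniformity_of_eq hW (congrArg f (eq_of_near y hy x hyx))
  exact hcompl ⟨hx, hy⟩

theorem UnifIsolated.finite_of_bourbakiBounded (hA : UnifIsolated A)
    (hbdd : BourbakiBounded A) : A.Finite := by
  by_contra hinf
  obtain ⟨f, hzero, hunbdd⟩ := exists_eqOn_compl_zero_not_bddAbove_image hinf
  have hf : UniformContinuous f :=
    hA.uniformContinuous_of_compl (uniformContinuous_const.uniformContinuousOn.congr hzero.symm)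
  obtain ⟨M, hM⟩ := hbdd f hf
  exact hunbdd ⟨M, Set.forall_mem_image.2 fun x hx => (le_abs_self _).trans (hM x hx)⟩

theorem ball_ne_singleton_of_mem_closure_compl {x : X} (hx : x ∈ closure ({x}ᶜ : Set X))
    (hU : U ∈ uniformity X) : UniformSpace.ball x U ≠ {x} := by
  intro hball
  rw [closure_compl] at hx
  exact hx (mem_interior_iff_mem_nhds.2 (hball ▸ UniformSpace.ball_mem_nhds x hU))

end

theorem stmt4 {X : Type*} [UniformSpace X]
    (h : ∀ f : X → ℝ, UniformContinuous f →
      ∃ k : ℝ, 0 ≤ k ∧ UnifIsolated {x : X | k ≤ |f x|}) :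
    (∀ B : Set X,
        BourbakiBounded B ↔
          ∀ U ∈ uniformity X, (B ∩ {x : X | UniformSpace.ball x U = {x}}).Finite) ∧
      BourbakiBounded {x : X | x ∈ closure ({x}ᶜ : Set X)} := by
  have bounded_iff (B : Set X) : BourbakiBounded B ↔
      ∀ U ∈ uniformity X, (B ∩ {x : X | UniformSpace.ball x U = {x}}).Finite := by
    refine ⟨fun hB U hU => ?_, fun hB f hf => ?_⟩
    · exact ((unifIsolated_setOf_ball_eq_singleton hU).mono
        Set.inter_subset_right).finite_of_bourbakiBounded (hB.mono Set.inter_subset_left)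
    · obtain ⟨k, -, U, hU, hball⟩ := h f hf
      exact exists_forall_le_of_finite_inter
        ((hB U hU).subset (Set.inter_subset_inter_right B hball))
  refine ⟨bounded_iff, (bounded_iff _).2 fun U hU => ?_⟩
  exact Set.finite_empty.subset fun x hx =>
    ball_ne_singleton_of_mem_closure_compl hx.1 hU hx.2
end

section
/- For every uniform space (X,𝒰) the following are equivalent: (a) every subset of X that is not Bourbaki bounded in X contains an infinite uniformly isolated subset; (b) for every subset A ⊆ X that is not Bourbaki bounded in X, there exist an entourage U ∈ 𝒰 and an infinite set B ⊆ A such that U[B] ⊆ A. -/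
/-- The image `U[A] = ⋃ x ∈ A, U[x]` of a set under a relation. -/
def relImage {X : Type*} (U : Set (X × X)) (A : Set X) : Set X :=
  ⋃ x ∈ A, UniformSpace.ball x U

/-!
A uniformly isolated set `B ⊆ A` satisfies `U[B] = B ⊆ A` for some entourage `U`. Conversely, let
`f` be uniformly continuous and unbounded on `A`, and choose a maximal subset `D ⊆ A` on which
distinct points have `f`-values more than `1` apart. By maximality every `f`-value on `A` is within
`1` of one on `D`, so `D` is not Bourbaki bounded either. If `U[B] ⊆ D`, then shrinking `U` to pairs
with `f`-values at most `1` apart leaves only `x` itself in `U[x]`, for each `x ∈ B`.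
-/

open Set Uniformity

section Separated

variable {X : Type*}

theorem exists_maximal_isSeparated (R : SetRel X X) (s : Set X) :
    ∃ N, Maximal (fun N ↦ N ⊆ s ∧ R.IsSeparated N) N := by
  refine zorn_subset {N | N ⊆ s ∧ R.IsSeparated N} fun c hc hchain ↦
    ⟨⋃₀ c, ⟨sUnion_subset fun N hN ↦ (hc hN).1, ?_⟩, fun _ ↦ subset_sUnion_of_mem⟩
  exact (pairwise_sUnion hchain.directedOn).2 fun N hN ↦ (hc hN).2

theorem exists_subset_isSeparated_isCover (R : SetRel X X) [R.IsRefl] [R.IsSymm] (s : Set X) :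
    ∃ N ⊆ s, R.IsSeparated N ∧ R.IsCover s N := by
  obtain ⟨N, hN⟩ := exists_maximal_isSeparated R s
  exact ⟨N, hN.prop.1, hN.prop.2, .of_maximal_isSeparated hN⟩

end Separated

section UniformSpace

variable {X : Type*} [UniformSpace X] {A B D : Set X} {U V : SetRel X X}

theorem UnifIsolated.exists_relImage_eq (hB : UnifIsolated B) : ∃ U ∈ 𝓤 X, relImage U B = B := by
  obtain ⟨U, hU, hball⟩ := hB
  refine ⟨U, hU, ?_⟩
  calc
    relImage U B = ⋃ x ∈ B, {x} := iUnion₂_congr hball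
    _ = B := biUnion_of_singleton B

theorem unifIsolated_of_relImage_subset_of_isSeparated (hU : U ∈ 𝓤 X) (hV : V ∈ 𝓤 X)
    (hD : V.IsSeparated D) (hBD : relImage U B ⊆ D) : UnifIsolated B := by
  have ball_subset : ∀ x ∈ B, UniformSpace.ball x U ⊆ D := iUnion₂_subset_iff.1 hBD
  refine ⟨U ∩ V, Filter.inter_mem hU hV, fun x hx ↦ ?_⟩
  have hxD : x ∈ D := ball_subset x hx (UniformSpace.mem_ball_self x hU)
  refine Subset.antisymm (fun y ⟨hxyU, hxyV⟩ ↦ ?_) <|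
    singleton_subset_iff.2 (UniformSpace.mem_ball_self x (Filter.inter_mem hU hV))
  exact (hD.eq hxD (ball_subset x hx hxyU) (not_not_intro hxyV)).symm

theorem exists_isSeparated_not_bourbakiBounded (hA : ¬ BourbakiBounded A) :
    ∃ V ∈ 𝓤 X, ∃ D ⊆ A, SetRel.IsSeparated V D ∧ ¬ BourbakiBounded D := by
  simp only [BourbakiBounded, not_forall] at hA
  obtain ⟨f, hf, hfA⟩ := hA
  let V : SetRel X X := {p | dist (f p.1) (f p.2) ≤ 1}
  have hV : V ∈ 𝓤 X := hf (Metric.uniformity_basis_dist_le.mem_of_mem one_pos)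
  have : V.IsRefl := ⟨fun x ↦ by simp [V]⟩
  have : V.IsSymm := ⟨fun x y hxy ↦ by simpa [V, dist_comm] using hxy⟩
  obtain ⟨D, hDA, hsep, hcover⟩ := exists_subset_isSeparated_isCover V A
  refine ⟨V, hV, D, hDA, hsep, fun hD ↦ hfA ?_⟩
  obtain ⟨M, hM⟩ := hD f hf
  refine ⟨1 + M, fun x hx ↦ ?_⟩
  obtain ⟨y, hyD, hxy⟩ := hcover hx
  calc
    |f x| = |(f x - f y) + f y| := by rw [sub_add_cancel]
    _ ≤ |f x - f y| + |f y| := abs_add_le _ _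
    _ ≤ 1 + M := add_le_add hxy (hM y hyD)

end UniformSpace

theorem stmt5 {X : Type*} [UniformSpace X] :
    (∀ A : Set X, ¬ BourbakiBounded A → ∃ B ⊆ A, B.Infinite ∧ UnifIsolated B) ↔
      (∀ A : Set X, ¬ BourbakiBounded A →
        ∃ U ∈ uniformity X, ∃ B ⊆ A, B.Infinite ∧ relImage U B ⊆ A) := by
  constructor
  · intro h A hA
    obtain ⟨B, hBA, hB, hisolated⟩ := h A hA
    obtain ⟨U, hU, hUB⟩ := hisolated.exists_relImage_eq
    exact ⟨U, hU, B, hBA, hB, hUB.trans_subset hBA⟩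
  · intro h A hA
    obtain ⟨V, hV, D, hDA, hsep, hD⟩ := exists_isSeparated_not_bourbakiBounded hA
    obtain ⟨U, hU, B, hBD, hB, hUB⟩ := h D hD
    exact ⟨B, hBD.trans hDA, hB, unifIsolated_of_relImage_subset_of_isSeparated hU hV hsep hUB⟩
end
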